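/- arXiv:1402.5735 — 4 statements merged into one kernel-verified Lean document; each statement's English description precedes it below -/
import Mathlib

section
/- Let A₁, A₂ be unital associative K-algebras with representations π₁ : A₁ → End_K(V₁), π₂ : A₂ → End_K(V₂) on K-vector spaces, and let D₁ ∈ End_K(V₁), D₂ ∈ End_K(V₂). Let φ : A₁ → A₂ be a unital K-algebra homomorphism and Φ : V₁ → V₂ a surjective K-linear map with Φ ∘ π₁(x) = π₂(φ(x)) ∘ Φ for all x ∈ A₁ and Φ ∘ D₁ = D₂ ∘ Φ. Then for every n ≥ 0 and every finite family of tuples (a_{t,0}, a_{t,1}, …, a_{t,n}) of elements of A₁: if Σ_t π₁(a_{t,0}) ∘ [D₁, π₁(a_{t,1})] ∘ ⋯ ∘ [D₁, π₁(a_{t,n})] = 0 in End_K(V₁), then Σ_t π₂(φ(a_{t,0})) ∘ [D₂, π₂(φ(a_{t,1}))] ∘ ⋯ ∘ [D₂, π₂(φ(a_{t,n}))] = 0 in End_K(V₂). (This is the well-definedness of the induced map Ψ : Ω_{D₁}^•(A₁) → Ω_{D₂}^•(A₂), making Connes' calculus a covariant functor.) -/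
/-!
The pairs `(T₁, T₂)` with `Φ ∘ T₁ = T₂ ∘ Φ` form a subring of `End V₁ × End V₂`, and `Φ` being
surjective makes `T₂` vanish whenever `T₁` does. A form `ρ(a₀)[D, ρ(a₁)]⋯[D, ρ(aₙ)]` is a
noncommutative polynomial, hence is preserved by ring homomorphisms. So a sum of forms on `V₁` and
the corresponding sum on `V₂` are the two projections of one sum of forms in this subring.
-/

section ConnesForm

variable {A B C : Type*} [Ring B] [Ring C] {n : ℕ}

/-- The form `ρ(a₀)[D, ρ(a₁)]⋯[D, ρ(aₙ)]` of degree `n`, the image of the universal form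
`a₀ da₁ ⋯ daₙ` in Connes' calculus. The target is an arbitrary ring, and `ρ` an arbitrary map, so
that forms can be transported along ring homomorphisms. -/
def connesForm (ρ : A → B) (D : B) (a : Fin (n + 1) → A) : B :=
  ρ (a 0) * (List.ofFn fun i : Fin n => ⁅D, ρ (a i.succ)⁆).prod

theorem map_connesForm (f : B →+* C) (ρ : A → B) (D : B) (a : Fin (n + 1) → A) :
    f (connesForm ρ D a) = connesForm (f ∘ ρ) (f D) a := by
  simp only [connesForm, Ring.lie_def, map_mul, map_list_prod, List.map_ofFn, Function.comp_def,
    map_sub]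

end ConnesForm

section Intertwining

variable {R V₁ V₂ : Type*} [Semiring R] [AddCommGroup V₁] [Module R V₁]
  [AddCommGroup V₂] [Module R V₂]

/-- The ring of pairs of endomorphisms intertwined by `Φ`, as a subring of the product so that the
two projections recover the endomorphisms of the source and of the target. -/
def intertwinedSubring (Φ : V₁ →ₗ[R] V₂) : Subring (Module.End R V₁ × Module.End R V₂) where
  carrier := {T | Φ ∘ₗ T.1 = T.2 ∘ₗ Φ}
  mul_mem' {S T} hS hT :=
    calc Φ ∘ₗ (S.1 ∘ₗ T.1) = (Φ ∘ₗ S.1) ∘ₗ T.1 := rfl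
      _ = S.2 ∘ₗ (Φ ∘ₗ T.1) := by rw [hS, LinearMap.comp_assoc]
      _ = (S.2 ∘ₗ T.2) ∘ₗ Φ := by rw [hT, LinearMap.comp_assoc]
  one_mem' := rfl
  add_mem' {S T} hS hT :=
    calc Φ ∘ₗ (S.1 + T.1) = Φ ∘ₗ S.1 + Φ ∘ₗ T.1 := LinearMap.comp_add ..
      _ = (S.2 + T.2) ∘ₗ Φ := by rw [hS, hT, LinearMap.add_comp]
  zero_mem' := LinearMap.comp_zero Φ
  neg_mem' {T} hT :=
    calc Φ ∘ₗ (-T.1) = -(Φ ∘ₗ T.1) := LinearMap.comp_neg ..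
      _ = (-T.2) ∘ₗ Φ := by rw [hT, LinearMap.neg_comp]

theorem snd_eq_zero_of_mem_intertwinedSubring {Φ : V₁ →ₗ[R] V₂} (hΦ : Function.Surjective Φ)
    {T : Module.End R V₁ × Module.End R V₂} (hT : T ∈ intertwinedSubring Φ) (h : T.1 = 0) :
    T.2 = 0 := by
  have hTΦ : Φ ∘ₗ T.1 = T.2 ∘ₗ Φ := hT
  rw [h, LinearMap.comp_zero] at hTΦ
  rw [← LinearMap.cancel_right hΦ, ← hTΦ, LinearMap.zero_comp]

theorem connes_calculus_functorial_general {A ι : Type*} {n : ℕ}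
    {ρ₁ : A → Module.End R V₁} {ρ₂ : A → Module.End R V₂}
    {D₁ : Module.End R V₁} {D₂ : Module.End R V₂} {Φ : V₁ →ₗ[R] V₂}
    (hΦ : Function.Surjective Φ) (hρ : ∀ x, Φ ∘ₗ ρ₁ x = ρ₂ x ∘ₗ Φ) (hD : Φ ∘ₗ D₁ = D₂ ∘ₗ Φ)
    (s : Finset ι) (a : ι → Fin (n + 1) → A) (h : ∑ t ∈ s, connesForm ρ₁ D₁ (a t) = 0) :
    ∑ t ∈ s, connesForm ρ₂ D₂ (a t) = 0 := by
  let ρ : A → intertwinedSubring Φ := fun x => ⟨(ρ₁ x, ρ₂ x), hρ x⟩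
  let D : intertwinedSubring Φ := ⟨(D₁, D₂), hD⟩
  let p₁ := (RingHom.fst _ _).comp (intertwinedSubring Φ).subtype
  let p₂ := (RingHom.snd _ _).comp (intertwinedSubring Φ).subtype
  let ω := ∑ t ∈ s, connesForm ρ D (a t)
  have fst_ω : p₁ ω = ∑ t ∈ s, connesForm ρ₁ D₁ (a t) :=
    (map_sum p₁ _ s).trans (Finset.sum_congr rfl fun t _ => map_connesForm p₁ ρ D (a t))
  have snd_ω : p₂ ω = ∑ t ∈ s, connesForm ρ₂ D₂ (a t) :=
    (map_sum p₂ _ s).trans (Finset.sum_congr rfl fun t _ => map_connesForm p₂ ρ D (a t))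
  rw [← snd_ω]
  exact snd_eq_zero_of_mem_intertwinedSubring hΦ ω.2 (fst_ω.trans h)

end Intertwining

/-- **Statement 2.** -/
theorem connes_calculus_functorial
    (K : Type*) [Field K]
    (A₁ A₂ : Type*) [Ring A₁] [Algebra K A₁] [Ring A₂] [Algebra K A₂]
    (V₁ V₂ : Type*) [AddCommGroup V₁] [Module K V₁] [AddCommGroup V₂] [Module K V₂]
    (π₁ : A₁ →ₐ[K] Module.End K V₁) (π₂ : A₂ →ₐ[K] Module.End K V₂)
    (D₁ : Module.End K V₁) (D₂ : Module.End K V₂)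
    (φ : A₁ →ₐ[K] A₂) (Φ : V₁ →ₗ[K] V₂)
    (hsurj : Function.Surjective Φ)
    (hπ : ∀ x : A₁, Φ ∘ₗ (π₁ x : V₁ →ₗ[K] V₁) = (π₂ (φ x) : V₂ →ₗ[K] V₂) ∘ₗ Φ)
    (hD : Φ ∘ₗ (D₁ : V₁ →ₗ[K] V₁) = (D₂ : V₂ →ₗ[K] V₂) ∘ₗ Φ)
    (n m : ℕ) (a : Fin m → Fin (n + 1) → A₁)
    (h0 : ∑ t : Fin m, π₁ (a t 0) *
        (List.ofFn fun i : Fin n =>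
          D₁ * π₁ (a t i.succ) - π₁ (a t i.succ) * D₁).prod = 0) :
    ∑ t : Fin m, π₂ (φ (a t 0)) *
        (List.ofFn fun i : Fin n =>
          D₂ * π₂ (φ (a t i.succ)) - π₂ (φ (a t i.succ)) * D₂).prod = 0 :=
  connes_calculus_functorial_general (ρ₂ := fun x => π₂ (φ x)) hsurj hπ hD Finset.univ a h0
end

section
/- Let (A, V, D, γ) be an even algebraic spectral triple over a field K with char K ≠ 2, and assume γ = π(η) for some η ∈ A. Then for every a ∈ A, the operator [D ∘ D, π(a)] lies in π(dJ₀¹), i.e. there exists a finite family of pairs (x_t, y_t) of elements of A such that Σ_t π(x_t) ∘ [D, π(y_t)] = 0 and [D ∘ D, π(a)] = Σ_t [D, π(x_t)] ∘ [D, π(y_t)]. -/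
/-!
Suppose `D` is itself a represented one-form, `D = ∑ π x [D, π y]`, and put
`θ = ∑ [D, π x] [D, π y]`. Then `[D, π a]` is a one-form in two ways: as the differential of `a`,
whose own differential is `0`, and as the commutator of the one-form `D` with `π a`, whose
differential, by the Leibniz rules, is `[θ, π a] - (D [D, π a] + [D, π a] D) = [θ - D², π a]`.
The difference of the two represents `0`, so `[θ - D², π a]` is junk. If `γ = π η` is an involution
anticommuting with `D`, then `D = -½ γ [D, γ]` is such a one-form, with `θ = -½ [D, γ]² = 2 D²`.
-/

section RepresentedForms

variable {A R : Type*} [Ring A] [Ring R] (π : A →+* R) (D : R)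

/-- The differential on represented one-forms, as the graph of all pairs
`(∑ π x [D, π y], ∑ [D, π x] [D, π y])`. It is a relation and not a function, because the second
entry depends on the chosen `x` and `y` and not only on the first entry. -/
def formDifferential : AddSubgroup (R × R) :=
  AddSubgroup.closure
    (Set.range fun p : A × A ↦ (π p.1 * ⁅D, π p.2⁆, ⁅D, π p.1⁆ * ⁅D, π p.2⁆))

/-- The junk two-forms `π(dJ₀¹)`: the differentials of all representations of the zero one-form. -/
def junkTwoForms : AddSubgroup R :=
  (formDifferential π D).comap (AddMonoidHom.inr R R)

variable {π D}

namespace formDifferential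

theorem mul_lie_mem (x y : A) :
    (π x * ⁅D, π y⁆, ⁅D, π x⁆ * ⁅D, π y⁆) ∈ formDifferential π D :=
  AddSubgroup.subset_closure ⟨(x, y), rfl⟩

theorem lie_mem (a : A) : (⁅D, π a⁆, 0) ∈ formDifferential π D := by
  simpa [Ring.lie_def] using mul_lie_mem (π := π) (D := D) 1 a

theorem exists_sum_eq {p : R × R} (hp : p ∈ formDifferential π D) :
    ∃ (m : ℕ) (x y : Fin m → A),
      ∑ t, (π (x t) * ⁅D, π (y t)⁆, ⁅D, π (x t)⁆ * ⁅D, π (y t)⁆) = p := by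
  induction hp using AddSubgroup.closure_induction with
  | mem _ h =>
    obtain ⟨⟨x, y⟩, rfl⟩ := h
    exact ⟨1, fun _ ↦ x, fun _ ↦ y, by simp⟩
  | zero => exact ⟨0, Fin.elim0, Fin.elim0, by simp⟩
  | add _ _ _ _ hp hq =>
    obtain ⟨m, x, y, rfl⟩ := hp
    obtain ⟨n, z, w, rfl⟩ := hq
    exact ⟨m + n, Fin.append x z, Fin.append y w, by simp [Fin.sum_univ_add]⟩
  | neg _ _ hp =>
    obtain ⟨m, x, y, rfl⟩ := hp
    refine ⟨m, fun t ↦ -x t, y, ?_⟩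
    rw [← Finset.sum_neg_distrib]
    refine Finset.sum_congr rfl fun t _ ↦ ?_
    ext <;> simp only [map_neg, Ring.lie_def, Prod.fst_neg, Prod.snd_neg] <;> noncomm_ring

theorem mul_left_mem (a : A) {p : R × R} (hp : p ∈ formDifferential π D) :
    (π a * p.1, ⁅D, π a⁆ * p.1 + π a * p.2) ∈ formDifferential π D := by
  let leibniz : R × R →+ R × R :=
    AddMonoidHom.mk' (fun p ↦ (π a * p.1, ⁅D, π a⁆ * p.1 + π a * p.2)) fun p q ↦ by
      ext <;> simp only [Prod.fst_add, Prod.snd_add] <;> noncomm_ring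
  suffices formDifferential π D ≤ (formDifferential π D).comap leibniz from this hp
  refine (AddSubgroup.closure_le _).2 ?_
  rintro _ ⟨⟨x, y⟩, rfl⟩
  change leibniz _ ∈ formDifferential π D
  convert mul_lie_mem (π := π) (D := D) (a * x) y using 1
  ext <;> simp only [leibniz, AddMonoidHom.mk'_apply, map_mul, Ring.lie_def] <;> noncomm_ring

theorem mul_right_mem {p : R × R} (hp : p ∈ formDifferential π D) (a : A) :
    (p.1 * π a, p.2 * π a - p.1 * ⁅D, π a⁆) ∈ formDifferential π D := by
  let leibniz : R × R →+ R × R :=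
    AddMonoidHom.mk' (fun p ↦ (p.1 * π a, p.2 * π a - p.1 * ⁅D, π a⁆)) fun p q ↦ by
      ext <;> simp only [Prod.fst_add, Prod.snd_add] <;> noncomm_ring
  suffices formDifferential π D ≤ (formDifferential π D).comap leibniz from this hp
  refine (AddSubgroup.closure_le _).2 ?_
  rintro _ ⟨⟨x, y⟩, rfl⟩
  change leibniz _ ∈ formDifferential π D
  -- `x [D, y] a = x [D, y a] - x y [D, a]`
  convert sub_mem (mul_lie_mem (π := π) (D := D) x (y * a)) (mul_lie_mem (x * y) a) using 1
  ext <;> simp only [leibniz, AddMonoidHom.mk'_apply, map_mul, Ring.lie_def, Prod.fst_sub,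
    Prod.snd_sub] <;> noncomm_ring

theorem self_two_mul_sq_mem {ε η : A} (hεη : 2 * (π ε * π η) = 1) (hη : π η * D = -(D * π η)) :
    (D, 2 * (D * D)) ∈ formDifferential π D := by
  have lie_η : ⁅D, π η⁆ = -(2 * (π η * D)) := by
    rw [Ring.lie_def, hη]; noncomm_ring
  have one_form : π ε * ⁅D, π η⁆ = -D :=
    calc π ε * ⁅D, π η⁆ = -(2 * (π ε * π η) * D) := by rw [lie_η]; noncomm_ring
      _ = -D := by rw [hεη, one_mul]
  have anticommute : D * ⁅D, π η⁆ = -(⁅D, π η⁆ * D) :=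
    calc D * ⁅D, π η⁆ = -(2 * (D * π η * D)) := by rw [lie_η]; noncomm_ring
      _ = -(⁅D, π η⁆ * D) := by rw [lie_η, hη]; noncomm_ring
  have two_form : ⁅D, π ε⁆ * ⁅D, π η⁆ = -(2 * (D * D)) :=
    calc ⁅D, π ε⁆ * ⁅D, π η⁆ = D * (π ε * ⁅D, π η⁆) - π ε * (D * ⁅D, π η⁆) := by
          rw [Ring.lie_def D (π ε)]; noncomm_ring
      _ = D * (π ε * ⁅D, π η⁆) + π ε * ⁅D, π η⁆ * D := by rw [anticommute]; noncomm_ring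
      _ = -(2 * (D * D)) := by rw [one_form]; noncomm_ring
  have h := neg_mem (mul_lie_mem (π := π) (D := D) ε η)
  rwa [one_form, two_form, Prod.neg_mk, neg_neg, neg_neg] at h

end formDifferential

theorem exists_sum_eq_of_mem_junkTwoForms {ω : R} (hω : ω ∈ junkTwoForms π D) :
    ∃ (m : ℕ) (x y : Fin m → A),
      ∑ t, π (x t) * ⁅D, π (y t)⁆ = 0 ∧ ω = ∑ t, ⁅D, π (x t)⁆ * ⁅D, π (y t)⁆ := by
  obtain ⟨m, x, y, h⟩ := formDifferential.exists_sum_eq hω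
  refine ⟨m, x, y, ?_, ?_⟩
  · simpa [Prod.fst_sum] using congrArg Prod.fst h
  · simpa [Prod.snd_sum] using congrArg Prod.snd h.symm

theorem lie_sub_sq_mem_junkTwoForms {θ : R} (hD : (D, θ) ∈ formDifferential π D) (a : A) :
    ⁅θ - D * D, π a⁆ ∈ junkTwoForms π D := by
  have commutator_mem :=
    sub_mem (formDifferential.mul_right_mem hD a) (formDifferential.mul_left_mem a hD)
  have h := sub_mem commutator_mem (formDifferential.lie_mem a)
  change (0, ⁅θ - D * D, π a⁆) ∈ formDifferential π D
  convert h using 1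
  ext <;> simp only [Ring.lie_def, Prod.fst_sub, Prod.snd_sub] <;> noncomm_ring

theorem D_sq_commutator_mem_dJ_general {ε η : A} (hεη : 2 * (π ε * π η) = 1)
    (hη : π η * D = -(D * π η)) (a : A) : ⁅D * D, π a⁆ ∈ junkTwoForms π D := by
  have h := lie_sub_sq_mem_junkTwoForms (formDifferential.self_two_mul_sq_mem hεη hη) a
  rwa [two_mul, add_sub_cancel_right] at h

end RepresentedForms

/-- **Statement 6.** -/
theorem D_sq_commutator_mem_dJ
    (K A V : Type*) [Field K] [Ring A] [Algebra K A] [AddCommGroup V] [Module K V]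
    (π : A →ₐ[K] Module.End K V) (D γ : Module.End K V)
    (hγ2 : γ * γ = 1)
    (hγπ : ∀ a : A, γ * π a = π a * γ)
    (hγD : γ * D = -(D * γ))
    (η : A) (hη : π η = γ)
    (hchar : (2 : K) ≠ 0)
    (a : A) :
    ∃ (m : ℕ) (x y : Fin m → A),
      (∑ t : Fin m, π (x t) * (D * π (y t) - π (y t) * D)) = 0 ∧
      (D * D) * π a - π a * (D * D)
        = ∑ t : Fin m, (D * π (x t) - π (x t) * D) * (D * π (y t) - π (y t) * D) := by
  subst hη
  have half : 2 * (π ((2 : K)⁻¹ • η) * π η) = 1 := by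
    rw [map_smul, smul_mul_assoc, hγ2, two_mul, ← add_smul, ← two_mul, mul_inv_cancel₀ hchar,
      one_smul]
  exact exists_sum_eq_of_mem_junkTwoForms
    (D_sq_commutator_mem_dJ_general (π := π.toRingHom) half hγD a)
end

section
/- Let (A, V, D, γ) be an even algebraic spectral triple over a field K with char K ≠ 2 such that γ lies in the image of π. Then for every n ≥ 2, π(dJ₀^n) = Σ_{i=0}^{n−1} π(Ω^i) · π(dJ₀^1) · π(Ω^{n−1−i}) as K-subspaces of End_K(V), where for subspaces X, Y ⊆ End_K(V), X·Y denotes the span of all composites x ∘ y with x ∈ X, y ∈ Y. -/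
/-!
STATEMENT 9: For an even algebraic spectral triple with represented grading (char K ≠ 2),
for every `n ≥ 2`: `π(dJ₀^n) = Σ_{i=0}^{n-1} π(Ω^i)·π(dJ₀^1)·π(Ω^{n-1-i})`.
-/

variable (K : Type*) [Field K]

section Defs

variable {A V : Type*} [Ring A] [Algebra K A] [AddCommGroup V] [Module K V]

/-- The ordered product `[D,π(c₀)]∘⋯∘[D,π(c_{k-1})]`. -/
def prodComm (π : A →ₐ[K] Module.End K V) (D : Module.End K V) {k : ℕ} (c : Fin k → A) :
    Module.End K V :=
  (List.ofFn fun s : Fin k => D * π (c s) - π (c s) * D).prod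

/-- The subspace `π(Ω^k)` of `End_K(V)`. -/
def piOmega (π : A →ₐ[K] Module.End K V) (D : Module.End K V) (k : ℕ) :
    Submodule K (Module.End K V) :=
  Submodule.span K {T | ∃ (a : A) (c : Fin k → A), T = π a * prodComm K π D c}

/-- The subspace `π(dJ₀^{k-1})` of `End_K(V)` (with `k` commutator factors);
`π(dJ₀^{-1}) := 0`. -/
def piDJ (π : A →ₐ[K] Module.End K V) (D : Module.End K V) : ℕ → Submodule K (Module.End K V)
  | 0 => ⊥
  | (k + 1) =>
    Submodule.span K
      {T | ∃ (m : ℕ) (x : Fin m → A) (c : Fin m → Fin k → A),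
        (∑ t : Fin m, π (x t) * prodComm K π D (c t)) = 0 ∧
        T = ∑ t : Fin m, (D * π (x t) - π (x t) * D) * prodComm K π D (c t)}

end Defs

/-!
Let `formPairs π D k` be the space of pairs `(π(ω), π(dω))`, where `ω` ranges over the universal
`k`-forms. Then `T ∈ π(dJ₀ᵏ)` iff `(0, T)` is such a pair, and the graded Leibniz rule makes these
pairs closed under the product `(w, w') (v, v') = (w v, w' v + (-1)ᵏ w v')`. If `w = 0` or `v = 0`,
only one term of the second component survives, so multiplying junk by represented forms on either
side gives junk. This proves `⊇` for every `D`.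

For `⊆`, note that `D δ(b) + δ(b) D = [D², π(b)]` for `δ(b) = [D, π(b)]`. Hence `π(dω)` and the
graded commutator of `D` with `π(ω)` differ by a sum of terms in which one factor `δ(b)` is replaced
by `± [D², π(b)]`. If `π(ω) = 0` the graded commutator vanishes, so it suffices that
`[D², π(b)] ∈ π(dJ₀¹)` for all `b`.

The represented grading `γ = π(g)` provides this. The form `g dc + d(c g) - c dg` is represented by
`γ δ(c) + δ(c) γ = 0`, and since `δ(g) = 2 D γ` its differential is represented by
`δ(g) δ(c) - δ(c) δ(g) = -2 [D², π(c)] γ`. Multiply by `γ` and divide by `-2`.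
-/

section Commutators

variable {R : Type*} [Ring R]

theorem lie_mul_eq_lie_mul_add_mul_lie (x y z : R) : ⁅x, y * z⁆ = ⁅x, y⁆ * z + y * ⁅x, z⁆ := by
  simp only [Ring.lie_def]
  noncomm_ring

theorem mul_lie_add_lie_mul (x y : R) : x * ⁅x, y⁆ + ⁅x, y⁆ * x = ⁅x ^ 2, y⁆ := by
  simp only [Ring.lie_def]
  noncomm_ring

theorem lie_eq_two_mul_of_anticommute {x y : R} (h : y * x = -(x * y)) : ⁅x, y⁆ = 2 * (x * y) := by
  rw [Ring.lie_def, h, sub_neg_eq_add, two_mul]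

theorem mul_lie_eq_neg_lie_mul {x y z : R} (hx : y * x = -(x * y)) (hz : y * z = z * y) :
    y * ⁅x, z⁆ = -(⁅x, z⁆ * y) := by
  calc y * ⁅x, z⁆ = y * x * z - y * z * x := by rw [Ring.lie_def]; noncomm_ring
    _ = -(x * y) * z - z * y * x := by rw [hx, hz]
    _ = -(x * (y * z)) - z * (y * x) := by noncomm_ring
    _ = -(⁅x, z⁆ * y) := by rw [hx, hz, Ring.lie_def]; noncomm_ring

theorem lie_mul_lie_sub_lie_mul_lie {x y z : R} (hx : y * x = -(x * y)) (hz : y * z = z * y) :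
    ⁅x, y⁆ * ⁅x, z⁆ - ⁅x, z⁆ * ⁅x, y⁆ = -(2 * (⁅x ^ 2, z⁆ * y)) := by
  calc ⁅x, y⁆ * ⁅x, z⁆ - ⁅x, z⁆ * ⁅x, y⁆
      = 2 * (x * (y * ⁅x, z⁆) - ⁅x, z⁆ * x * y) := by
        rw [lie_eq_two_mul_of_anticommute hx]
        noncomm_ring
    _ = -(2 * ((x * ⁅x, z⁆ + ⁅x, z⁆ * x) * y)) := by
        rw [mul_lie_eq_neg_lie_mul hx hz]
        noncomm_ring
    _ = -(2 * (⁅x ^ 2, z⁆ * y)) := by rw [mul_lie_add_lie_mul]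

end Commutators

section RepresentedForms

variable {K}
variable {A V : Type*} [Ring A] [Algebra K A] [AddCommGroup V] [Module K V]
variable {π : A →ₐ[K] Module.End K V} {D : Module.End K V}

theorem prodComm_zero (c : Fin 0 → A) : prodComm K π D c = 1 := by
  simp [prodComm]

theorem prodComm_snoc {k : ℕ} (c : Fin k → A) (b : A) :
    prodComm K π D (Fin.snoc c b : Fin (k + 1) → A) = prodComm K π D c * ⁅D, π b⁆ := by
  simp only [prodComm, List.ofFn_succ_last, List.prod_append, List.prod_singleton, Ring.lie_def,
    Fin.snoc_castSucc, Fin.snoc_last]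

variable (π D) in
/-- The space of pairs `(π(ω), π(dω))`, for `ω` a universal form of degree `k`. It replaces the
universal differential calculus: `π(dω)` is not a function of `π(ω)`, so both are recorded. -/
def formPairs (k : ℕ) : Submodule K (Module.End K V × Module.End K V) :=
  Submodule.span K {p | ∃ (a : A) (c : Fin k → A),
    (π a * prodComm K π D c, ⁅D, π a⁆ * prodComm K π D c) = p}

variable (π D) in
theorem map_lie_mem_formPairs_zero (a : A) : (π a, ⁅D, π a⁆) ∈ formPairs π D 0 :=
  Submodule.subset_span ⟨a, Fin.elim0, by simp [prodComm_zero]⟩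

theorem mul_lie_mem_formPairs {k : ℕ} {p : Module.End K V × Module.End K V}
    (hp : p ∈ formPairs π D k) (b : A) :
    (p.1 * ⁅D, π b⁆, p.2 * ⁅D, π b⁆) ∈ formPairs π D (k + 1) := by
  induction hp using Submodule.span_induction with
  | mem p hp =>
    obtain ⟨a, c, rfl⟩ := hp
    exact Submodule.subset_span ⟨a, Fin.snoc c b, by simp [prodComm_snoc, mul_assoc]⟩
  | zero => simp [← Prod.zero_eq_mk]
  | add p q _ _ hp hq => simpa [add_mul] using add_mem hp hq
  | smul r p _ hp => simpa using Submodule.smul_mem _ r hp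

@[elab_as_elim]
theorem formPairs_induction
    {motive : (k : ℕ) → (p : Module.End K V × Module.End K V) → p ∈ formPairs π D k → Prop}
    (base : ∀ a, motive 0 (π a, ⁅D, π a⁆) (map_lie_mem_formPairs_zero π D a))
    (mul_lie : ∀ k p hp b, motive k p hp →
      motive (k + 1) (p.1 * ⁅D, π b⁆, p.2 * ⁅D, π b⁆) (mul_lie_mem_formPairs hp b))
    (smul_add : ∀ k (r : K) p q hp hq, motive k p hp → motive k q hq →
      motive k (r • p + q) (add_mem (Submodule.smul_mem _ r hp) hq))
    {k : ℕ} {p : Module.End K V × Module.End K V} (hp : p ∈ formPairs π D k) : motive k p hp := by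
  have generator : ∀ k (a : A) (c : Fin k → A), motive k
      (π a * prodComm K π D c, ⁅D, π a⁆ * prodComm K π D c)
      (Submodule.subset_span ⟨a, c, rfl⟩) := by
    intro k a c
    induction c using Fin.snocInduction with
    | elim0 => simpa [prodComm_zero] using base a
    | snoc c b ih => simpa [prodComm_snoc, mul_assoc] using mul_lie _ _ _ b ih
  have zero : ∀ k, motive k 0 (zero_mem _) := by
    intro k
    simpa [Ring.lie_def, ← Prod.zero_eq_mk] using generator k 0 0
  induction hp using Submodule.span_induction with
  | mem p hp =>
    obtain ⟨a, c, rfl⟩ := hp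
    exact generator k a c
  | zero => exact zero k
  | add p q _ _ hp hq => simpa using smul_add k 1 p q _ _ hp hq
  | smul r p _ hp => simpa using smul_add k r p 0 _ _ hp (zero k)

theorem mul_map_mem_formPairs {k : ℕ} {p : Module.End K V × Module.End K V}
    (hp : p ∈ formPairs π D k) (b : A) :
    (p.1 * π b, p.2 * π b + (-1 : K) ^ k • (p.1 * ⁅D, π b⁆)) ∈ formPairs π D k := by
  induction hp using formPairs_induction generalizing b with
  | base a =>
    simpa [lie_mul_eq_lie_mul_add_mul_lie] using map_lie_mem_formPairs_zero π D (a * b)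
  | mul_lie k p hp e ih =>
    -- `(de) b = d(e b) - e db` moves `b` past the last factor.
    convert sub_mem (mul_lie_mem_formPairs hp (e * b)) (mul_lie_mem_formPairs (ih e) b) using 1
    ext1
    · simp [map_mul, lie_mul_eq_lie_mul_add_mul_lie, mul_add, mul_assoc]
    · simp only [map_mul, lie_mul_eq_lie_mul_add_mul_lie, mul_add, add_mul, smul_mul_assoc,
        mul_assoc, pow_succ, mul_neg, mul_one, neg_smul, Prod.snd_sub]
      abel
  | smul_add k r p q _ _ hp hq =>
    convert add_mem (Submodule.smul_mem _ r (hp b)) (hq b) using 1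
    ext1
    · simp [add_mul]
    · simp only [Prod.fst_add, Prod.snd_add, Prod.smul_fst, Prod.smul_snd, add_mul, smul_mul_assoc]
      module

theorem mul_mem_formPairs {i j : ℕ} {p q : Module.End K V × Module.End K V}
    (hp : p ∈ formPairs π D i) (hq : q ∈ formPairs π D j) :
    (p.1 * q.1, p.2 * q.1 + (-1 : K) ^ i • (p.1 * q.2)) ∈ formPairs π D (i + j) := by
  induction hq using formPairs_induction with
  | base b => exact mul_map_mem_formPairs hp b
  | mul_lie j q _ b ih =>
    simpa [add_mul, mul_assoc, ← Nat.add_assoc] using mul_lie_mem_formPairs ih b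
  | smul_add j r q q' _ _ hq hq' =>
    convert add_mem (Submodule.smul_mem _ r hq) hq' using 1
    ext1
    · simp [mul_add]
    · simp only [Prod.fst_add, Prod.snd_add, Prod.smul_fst, Prod.smul_snd, mul_add, mul_smul_comm]
      module

theorem map_fst_formPairs (k : ℕ) :
    (formPairs π D k).map (LinearMap.fst K _ _) = piOmega K π D k := by
  rw [formPairs, Submodule.map_span, piOmega]
  congr 1
  aesop

theorem mem_piOmega_iff_exists_mem_formPairs {k : ℕ} {w : Module.End K V} :
    w ∈ piOmega K π D k ↔ ∃ w', (w, w') ∈ formPairs π D k := by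
  simp [← map_fst_formPairs]

theorem mem_piDJ_succ_iff_mem_formPairs {k : ℕ} {T : Module.End K V} :
    T ∈ piDJ K π D (k + 1) ↔ (0, T) ∈ formPairs π D k := by
  constructor
  · intro hT
    induction hT using Submodule.span_induction with
    | mem T hT =>
      obtain ⟨m, x, c, h0, rfl⟩ := hT
      have hsum : ∑ t, (π (x t) * prodComm K π D (c t), ⁅D, π (x t)⁆ * prodComm K π D (c t))
          ∈ formPairs π D k :=
        sum_mem fun t _ => Submodule.subset_span ⟨x t, c t, rfl⟩
      rwa [← prod_mk_sum, h0] at hsum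
    | zero => exact zero_mem _
    | add S T _ _ hS hT => simpa using add_mem hS hT
    | smul r T _ hT => simpa using Submodule.smul_mem _ r hT
  · intro hT
    obtain ⟨m, r, p, hp⟩ := Submodule.mem_span_set'.1 hT
    choose x c hxc using fun t => (p t).2
    simp only [← hxc, Prod.smul_mk, ← prod_mk_sum, Prod.mk.injEq] at hp
    refine Submodule.subset_span ⟨m, fun t => r t • x t, c, ?_, ?_⟩
    · simpa using hp.1
    · simpa [Ring.lie_def, smul_sub, sub_mul] using hp.2.symm

theorem piOmega_mul_piOmega_le (i j : ℕ) :
    piOmega K π D i * piOmega K π D j ≤ piOmega K π D (i + j) := by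
  refine Submodule.mul_le.2 fun w hw v hv => ?_
  obtain ⟨w', hw⟩ := mem_piOmega_iff_exists_mem_formPairs.1 hw
  obtain ⟨v', hv⟩ := mem_piOmega_iff_exists_mem_formPairs.1 hv
  exact mem_piOmega_iff_exists_mem_formPairs.2 ⟨_, mul_mem_formPairs hw hv⟩

theorem piOmega_mul_piDJ_le (i : ℕ) :
    ∀ k, piOmega K π D i * piDJ K π D k ≤ piDJ K π D (i + k)
  | 0 => by simp [piDJ]
  | k + 1 => by
    refine Submodule.mul_le.2 fun w hw T hT => ?_
    obtain ⟨w', hw⟩ := mem_piOmega_iff_exists_mem_formPairs.1 hw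
    have hwT := mul_mem_formPairs hw (mem_piDJ_succ_iff_mem_formPairs.1 hT)
    refine mem_piDJ_succ_iff_mem_formPairs.2 ?_
    simpa [smul_smul, ← mul_pow] using Submodule.smul_mem _ ((-1 : K) ^ i) hwT

theorem piDJ_mul_piOmega_le (j : ℕ) :
    ∀ k, piDJ K π D k * piOmega K π D j ≤ piDJ K π D (k + j)
  | 0 => by simp [piDJ]
  | k + 1 => by
    rw [Nat.add_right_comm]
    refine Submodule.mul_le.2 fun T hT v hv => ?_
    obtain ⟨v', hv⟩ := mem_piOmega_iff_exists_mem_formPairs.1 hv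
    have hTv := mul_mem_formPairs (mem_piDJ_succ_iff_mem_formPairs.1 hT) hv
    exact mem_piDJ_succ_iff_mem_formPairs.2 (by simpa using hTv)

theorem map_mem_piOmega_zero (a : A) : π a ∈ piOmega K π D 0 :=
  mem_piOmega_iff_exists_mem_formPairs.2 ⟨_, map_lie_mem_formPairs_zero π D a⟩

variable (π D) in
theorem one_mem_formPairs_zero : (1, 0) ∈ formPairs π D 0 := by
  simpa [Ring.lie_def] using map_lie_mem_formPairs_zero π D 1

theorem one_mem_piOmega_zero : 1 ∈ piOmega K π D 0 :=
  mem_piOmega_iff_exists_mem_formPairs.2 ⟨0, one_mem_formPairs_zero π D⟩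

theorem lie_mem_piOmega_one (b : A) : ⁅D, π b⁆ ∈ piOmega K π D 1 :=
  mem_piOmega_iff_exists_mem_formPairs.2
    ⟨0, by simpa using mul_lie_mem_formPairs (one_mem_formPairs_zero π D) b⟩

variable (π D) in
/-- The part of the two-sided ideal generated by `π(dJ₀¹)` that consists of forms of degree `k + 1`.
Like `π(dJ₀ᵏ)`, it is indexed by the degree before differentiation. -/
def junkIdeal (k : ℕ) : Submodule K (Module.End K V) :=
  ∑ i ∈ Finset.range k, piOmega K π D i * piDJ K π D 2 * piOmega K π D (k - 1 - i)

theorem junkIdeal_le_piDJ (k : ℕ) : junkIdeal π D k ≤ piDJ K π D (k + 1) := by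
  refine Finset.sum_induction _ (· ≤ piDJ K π D (k + 1)) (fun _ _ => sup_le) bot_le fun i hi => ?_
  have hdeg : i + 2 + (k - 1 - i) = k + 1 := by
    have := Finset.mem_range.1 hi
    omega
  calc piOmega K π D i * piDJ K π D 2 * piOmega K π D (k - 1 - i)
      ≤ piDJ K π D (i + 2) * piOmega K π D (k - 1 - i) :=
        mul_le_mul_left (piOmega_mul_piDJ_le i 2) _
    _ ≤ piDJ K π D (i + 2 + (k - 1 - i)) := piDJ_mul_piOmega_le _ _
    _ = piDJ K π D (k + 1) := by rw [hdeg]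

theorem junkIdeal_mul_piOmega_one_add_le (k : ℕ) :
    junkIdeal π D k * piOmega K π D 1 + piOmega K π D k * piDJ K π D 2 * piOmega K π D 0
      ≤ junkIdeal π D (k + 1) := by
  rw [junkIdeal, junkIdeal, Finset.sum_range_succ, Finset.sum_mul, Nat.add_sub_cancel, Nat.sub_self]
  refine add_le_add_left (Finset.sum_le_sum fun i hi => ?_) _
  have hdeg : k - 1 - i + 1 = k - i := by
    have := Finset.mem_range.1 hi
    omega
  rw [mul_assoc _ _ (piOmega K π D 1), ← hdeg]
  exact mul_le_mul_right (piOmega_mul_piOmega_le _ _) _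

theorem gradedComm_sub_mem_junkIdeal (h : ∀ a, ⁅D ^ 2, π a⁆ ∈ piDJ K π D 2) {k : ℕ}
    {p : Module.End K V × Module.End K V} (hp : p ∈ formPairs π D k) :
    D * p.1 - (-1 : K) ^ k • (p.1 * D) - p.2 ∈ junkIdeal π D k := by
  induction hp using formPairs_induction with
  | base a => simp [Ring.lie_def]
  | mul_lie k p hp b ih =>
    have hsplit : D * (p.1 * ⁅D, π b⁆) - (-1 : K) ^ (k + 1) • (p.1 * ⁅D, π b⁆ * D) - p.2 * ⁅D, π b⁆
        = (D * p.1 - (-1 : K) ^ k • (p.1 * D) - p.2) * ⁅D, π b⁆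
          + (-1 : K) ^ k • (p.1 * ⁅D ^ 2, π b⁆ * 1) := by
      rw [← mul_lie_add_lie_mul]
      simp only [pow_succ, mul_neg, mul_one, neg_smul, mul_add, sub_mul, smul_add, smul_mul_assoc,
        mul_assoc]
      abel
    have hp1 : p.1 ∈ piOmega K π D k := mem_piOmega_iff_exists_mem_formPairs.2 ⟨p.2, hp⟩
    rw [hsplit]
    refine junkIdeal_mul_piOmega_one_add_le k (Submodule.add_mem_sup ?_ ?_)
    · exact Submodule.mul_mem_mul ih (lie_mem_piOmega_one b)
    · exact Submodule.smul_mem _ _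
        (Submodule.mul_mem_mul (Submodule.mul_mem_mul hp1 (h b)) one_mem_piOmega_zero)
  | smul_add k r p q _ _ hp hq =>
    convert add_mem (Submodule.smul_mem _ r hp) hq using 1
    simp only [Prod.fst_add, Prod.snd_add, Prod.smul_fst, Prod.smul_snd, add_mul, mul_add,
      mul_smul_comm, smul_mul_assoc]
    module

theorem piDJ_eq_sum_mul_general (h : ∀ a, ⁅D ^ 2, π a⁆ ∈ piDJ K π D 2) (n : ℕ) :
    piDJ K π D (n + 1)
      = ∑ i ∈ Finset.range n,
          piOmega K π D i * piDJ K π D 2 * piOmega K π D (n - 1 - i) := by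
  change piDJ K π D (n + 1) = junkIdeal π D n
  refine le_antisymm (fun T hT => ?_) (junkIdeal_le_piDJ n)
  simpa using gradedComm_sub_mem_junkIdeal h (mem_piDJ_succ_iff_mem_formPairs.1 hT)

section Grading

variable {g c : A}

theorem lie_sq_mul_mem_piDJ_two (hgπ : π g * π c = π c * π g)
    (hgD : π g * D = -(D * π g)) (hchar : (2 : K) ≠ 0) :
    ⁅D ^ 2, π c⁆ * π g ∈ piDJ K π D 2 := by
  have hform : π g * ⁅D, π c⁆ + ⁅D, π (c * g)⁆ - π c * ⁅D, π g⁆ = 0 := by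
    rw [map_mul, lie_mul_eq_lie_mul_add_mul_lie, mul_lie_eq_neg_lie_mul hgD hgπ]
    abel
  have hmem : (0, ⁅D, π g⁆ * ⁅D, π c⁆ - ⁅D, π c⁆ * ⁅D, π g⁆) ∈ formPairs π D 1 := by
    simpa [← map_mul, hform] using sub_mem
      (add_mem (mul_lie_mem_formPairs (map_lie_mem_formPairs_zero π D g) c)
        (mul_lie_mem_formPairs (one_mem_formPairs_zero π D) (c * g)))
      (mul_lie_mem_formPairs (map_lie_mem_formPairs_zero π D c) g)
  have hjunk : (2 : K) • (⁅D ^ 2, π c⁆ * π g) ∈ piDJ K π D 2 := by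
    rw [two_smul, ← two_mul, ← neg_mem_iff, ← lie_mul_lie_sub_lie_mul_lie hgD hgπ]
    exact mem_piDJ_succ_iff_mem_formPairs.2 hmem
  exact (Submodule.smul_mem_iff _ hchar).1 hjunk

theorem lie_sq_mem_piDJ_two (hg2 : π g * π g = 1) (hgπ : π g * π c = π c * π g)
    (hgD : π g * D = -(D * π g)) (hchar : (2 : K) ≠ 0) :
    ⁅D ^ 2, π c⁆ ∈ piDJ K π D 2 := by
  have h := piDJ_mul_piOmega_le 0 2 (Submodule.mul_mem_mul
    (lie_sq_mul_mem_piDJ_two hgπ hgD hchar) (map_mem_piOmega_zero g))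
  rwa [mul_assoc, hg2, mul_one] at h

end Grading

end RepresentedForms

/-- **Statement 9.** `π(dJ₀^n) = Σ_{i=0}^{n-1} π(Ω^i)·π(dJ₀^1)·π(Ω^{n-1-i})` for `n ≥ 2`
(note `π(dJ₀^n)` has `n+1` commutator factors and `π(dJ₀^1)` has two; `X·Y` is the span of
composites, i.e. the product of submodules of the algebra `End_K(V)`). -/
theorem piDJ_eq_sum_mul
    (A V : Type*) [Ring A] [Algebra K A] [AddCommGroup V] [Module K V]
    (π : A →ₐ[K] Module.End K V) (D γ : Module.End K V)
    (hγ2 : γ * γ = 1) (hγπ : ∀ a : A, γ * π a = π a * γ) (hγD : γ * D = -(D * γ))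
    (hrange : γ ∈ Set.range ⇑π) (hchar : (2 : K) ≠ 0)
    (n : ℕ) (hn : 2 ≤ n) :
    piDJ K π D (n + 1)
      = ∑ i ∈ Finset.range n,
          piOmega K π D i * piDJ K π D 2 * piOmega K π D (n - 1 - i) := by
  obtain ⟨g, rfl⟩ := hrange
  exact piDJ_eq_sum_mul_general (fun c => lie_sq_mem_piDJ_two hγ2 (hγπ c) hγD hchar) n
end

section
/- Let V be a vector space over a field K and D ∈ End_K(V) with D ∘ D = 0. Then for every m ≥ 0 and every finite family of tuples (x_{t,0}, x_{t,1}, …, x_{t,m}) of elements of End_K(V): if Σ_t x_{t,0} ∘ [D, x_{t,1}] ∘ ⋯ ∘ [D, x_{t,m}] = 0, then Σ_t [D, x_{t,0}] ∘ [D, x_{t,1}] ∘ ⋯ ∘ [D, x_{t,m}] = 0. (Equivalently, π(dJ₀^m) = {0} for every m whenever D² = 0; this is the key step in computing Ω_D^•(C^∞(M)~) for the triple built from the de Rham differential, which squares to zero.) -/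
/-!
The anticommutator of `D` with `⁅D, y⁆` is `⁅D ^ 2, y⁆`, so `D` anticommutes with `⁅D, y⁆` as soon
as `D ^ 2` commutes with `y`. A product `P` of `m` such commutators then satisfies
`D P = (-1)^m P D`, and therefore `⁅D, a⁆ P = D (a P) - (a P) ((-1)^m D)`. The right-hand side is
additive in `a P`, so it sums to zero over a family whose terms `a P` add up to zero.
-/

section Anticommuting

variable {M : Type*} [Monoid M] [HasDistribNeg M] {D : M}

lemma semiconjBy_list_prod_neg_one_pow_mul {l : List M} (hl : ∀ c ∈ l, SemiconjBy c (-D) D) :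
    SemiconjBy l.prod ((-1) ^ l.length * D) D := by
  induction l with
  | nil => simp
  | cons c l ih =>
    obtain ⟨hc, hl⟩ := List.forall_mem_cons.mp hl
    rw [List.prod_cons, List.length_cons, pow_succ', neg_one_mul, neg_mul]
    exact hc.mul_left (ih hl).neg_right

end Anticommuting

section Commutators

variable {R : Type*} [Ring R] {D : R}

lemma mul_lie_add_lie_mul_self (D y : R) : D * ⁅D, y⁆ + ⁅D, y⁆ * D = ⁅D * D, y⁆ := by
  simp only [Ring.lie_def]
  noncomm_ring

lemma semiconjBy_lie_neg_of_commute_mul_self {y : R} (hy : Commute (D * D) y) :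
    SemiconjBy ⁅D, y⁆ (-D) D := by
  have anticomm : D * ⁅D, y⁆ + ⁅D, y⁆ * D = 0 := by
    rw [mul_lie_add_lie_mul_self, hy.lie_eq]
  rw [SemiconjBy, mul_neg]
  exact (eq_neg_of_add_eq_zero_left anticomm).symm

lemma semiconjBy_prod_ofFn_lie {m : ℕ} {y : Fin m → R} (hy : ∀ i, Commute (D * D) (y i)) :
    SemiconjBy (List.ofFn fun i => ⁅D, y i⁆).prod ((-1) ^ m * D) D := by
  have anticomm : ∀ c ∈ List.ofFn fun i => ⁅D, y i⁆, SemiconjBy c (-D) D :=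
    List.forall_mem_ofFn_iff.mpr fun i => semiconjBy_lie_neg_of_commute_mul_self (hy i)
  simpa only [List.length_ofFn] using semiconjBy_list_prod_neg_one_pow_mul anticomm

lemma lie_mul_of_semiconjBy {E P : R} (hP : SemiconjBy P E D) (a : R) :
    ⁅D, a⁆ * P = D * (a * P) - a * P * E := by
  rw [Ring.lie_def, sub_mul, mul_assoc, mul_assoc a D, ← hP.eq, ← mul_assoc a P]

theorem dJ_vanishes_of_D_sq_zero_general {ι : Type*} {s : Finset ι} {m : ℕ}
    {x : ι → Fin (m + 1) → R} (hD : ∀ t ∈ s, ∀ i : Fin m, Commute (D * D) (x t i.succ))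
    (hx : ∑ t ∈ s, x t 0 * (List.ofFn fun i : Fin m => ⁅D, x t i.succ⁆).prod = 0) :
    ∑ t ∈ s, (List.ofFn fun i => ⁅D, x t i⁆).prod = 0 := by
  let ω (t : ι) : R := x t 0 * (List.ofFn fun i : Fin m => ⁅D, x t i.succ⁆).prod
  calc
    ∑ t ∈ s, (List.ofFn fun i => ⁅D, x t i⁆).prod
      = ∑ t ∈ s, (D * ω t - ω t * ((-1) ^ m * D)) := by
        refine Finset.sum_congr rfl fun t ht => ?_
        rw [List.ofFn_succ, List.prod_cons]
        exact lie_mul_of_semiconjBy (semiconjBy_prod_ofFn_lie (hD t ht)) (x t 0)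
    _ = D * ∑ t ∈ s, ω t - (∑ t ∈ s, ω t) * ((-1) ^ m * D) := by
        rw [Finset.sum_sub_distrib, Finset.mul_sum, Finset.sum_mul]
    _ = 0 := by rw [hx, mul_zero, zero_mul, sub_zero]

end Commutators

/-- **Statement 10.** -/
theorem dJ_vanishes_of_D_sq_zero
    (K V : Type*) [Field K] [AddCommGroup V] [Module K V]
    (D : Module.End K V) (hD : D * D = 0) :
    ∀ (m k : ℕ) (x : Fin k → Fin (m + 1) → Module.End K V),
      (∑ t : Fin k, x t 0 *
          (List.ofFn fun i : Fin m => D * x t i.succ - x t i.succ * D).prod) = 0 →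
      (∑ t : Fin k,
          (List.ofFn fun i : Fin (m + 1) => D * x t i - x t i * D).prod) = 0 :=
  fun _ _ x => dJ_vanishes_of_D_sq_zero_general fun t _ i => hD ▸ Commute.zero_left (x t i.succ)
end
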